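/- Let H be a hypergraph with finite vertex type U, n = |U|, and nonempty edges e : J → Finset U. Define a CNF formula F over the variables U with index set U ⊕ J by F(inl x) = {(x, true)} for x ∈ U and F(inr j) = {(v, false) : v ∈ e j} for j ∈ J. Then ν(F) = n, and for every natural number k, H has a hitting set S with |S| + k ≤ |J| if and only if sat(F) ≥ n + k. -/

import Mathlib

/-!
Matching each vertex with its unit clause uses every variable, so `ν(F) = n`.

An assignment is determined by the set `T` of its false variables. It falsifies the unit clauses of
the vertices in `T` and the clauses of the edges that `T` misses, so `sat(F)` is `n + |J|` minus the
minimum of `|T| + #(edges missed by T)` over all `T`. This minimum is the least size of a hitting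
set: a hitting set misses no edge, and adding to `T` one vertex of each edge that it misses gives a
hitting set.
-/

open scoped Classical

/-- A truth assignment `τ` satisfies a clause `c` (a finite set of literals `(v, b)`)
if some literal `(v, b) ∈ c` has `τ v = b`. -/
def Satisfies {V : Type*} (τ : V → Bool) (c : Finset (V × Bool)) : Prop :=
  ∃ l ∈ c, τ l.1 = l.2

/-- `satCount F τ` is the number of indices whose clause is satisfied by `τ`. -/
noncomputable def satCount {V I : Type*} [Fintype I]
    (F : I → Finset (V × Bool)) (τ : V → Bool) : ℕ :=
  (Finset.univ.filter fun i => Satisfies τ (F i)).card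

/-- `satMax F` is the maximum of `satCount F τ` over all assignments `τ`. -/
noncomputable def satMax {V I : Type*} [Fintype V] [Fintype I]
    (F : I → Finset (V × Bool)) : ℕ :=
  Finset.univ.sup fun τ : V → Bool => satCount F τ

/-- `M` is a matching of the formula `F`: each pair `(v, i) ∈ M` has variable `v`
occurring in clause `F i`, and the pairs have pairwise distinct variables and
pairwise distinct indices. -/
def IsMatching {V I : Type*} (F : I → Finset (V × Bool)) (M : Finset (V × I)) : Prop :=
  (∀ p ∈ M, ∃ b, (p.1, b) ∈ F p.2) ∧
  ∀ p ∈ M, ∀ q ∈ M, p ≠ q → p.1 ≠ q.1 ∧ p.2 ≠ q.2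

/-- The matching number `ν(F)`: the largest size of a matching of `F`. -/
noncomputable def matchNum {V I : Type*} [Fintype V] [Fintype I]
    (F : I → Finset (V × Bool)) : ℕ :=
  (Finset.univ.filter fun M : Finset (V × I) => IsMatching F M).sup Finset.card

section Formula

variable {V I I' : Type*}

lemma satisfies_singleton {τ : V → Bool} {l : V × Bool} : Satisfies τ {l} ↔ τ l.1 = l.2 := by
  simp only [Satisfies, Finset.mem_singleton, exists_eq_left]

lemma satisfies_image_mk {τ : V → Bool} {s : Finset V} {b : Bool} :
    Satisfies τ (s.image fun v => (v, b)) ↔ ∃ v ∈ s, τ v = b :=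
  Finset.exists_mem_image

lemma satCount_add_card_not_satisfies [Fintype I] (F : I → Finset (V × Bool)) (τ : V → Bool) :
    satCount F τ + (Finset.univ.filter fun i => ¬ Satisfies τ (F i)).card = Fintype.card I :=
  Finset.card_filter_add_card_filter_not _

lemma satCount_sumElim [Fintype I] [Fintype I'] (F : I → Finset (V × Bool))
    (G : I' → Finset (V × Bool)) (τ : V → Bool) :
    satCount (Sum.elim F G) τ = satCount F τ + satCount G τ := by
  simp only [satCount, Finset.card_filter]
  exact Fintype.sum_sum_type _

lemma le_satMax_iff [Fintype V] [Fintype I] {F : I → Finset (V × Bool)} {m : ℕ} :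
    m ≤ satMax F ↔ ∃ τ, m ≤ satCount F τ := by
  constructor
  · intro hm
    obtain ⟨τ, -, hτ⟩ := Finset.exists_mem_eq_sup Finset.univ Finset.univ_nonempty (satCount F)
    exact ⟨τ, hm.trans hτ.le⟩
  · rintro ⟨τ, hτ⟩
    exact hτ.trans (Finset.le_sup (f := satCount F) (Finset.mem_univ τ))

lemma IsMatching.card_le [Fintype V] {F : I → Finset (V × Bool)} {M : Finset (V × I)}
    (hM : IsMatching F M) : M.card ≤ Fintype.card V := by
  have fst_injOn : Set.InjOn Prod.fst (M : Set (V × I)) := fun p hp q hq hpq =>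
    by_contra fun hne => (hM.2 p hp q hq hne).1 hpq
  exact Finset.card_le_card_of_injOn Prod.fst (fun _ _ => Finset.mem_univ _) fst_injOn

lemma isMatching_image_graph {F : I → Finset (V × Bool)} {f : V → I} {s : Finset V}
    (hf : Set.InjOn f s) (hF : ∀ v ∈ s, ∃ b, (v, b) ∈ F (f v)) :
    IsMatching F (s.image fun v => (v, f v)) := by
  simp only [IsMatching, Finset.forall_mem_image]
  refine ⟨fun v hv => hF v hv, fun v hv w hw hne => ?_⟩
  have hvw : v ≠ w := fun h => hne (h ▸ rfl)
  exact ⟨hvw, hf.ne hv hw hvw⟩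

lemma matchNum_eq_card_of_injective [Fintype V] [Fintype I] {F : I → Finset (V × Bool)}
    {f : V → I} (hf : f.Injective) (hF : ∀ v, ∃ b, (v, b) ∈ F (f v)) :
    matchNum F = Fintype.card V := by
  refine le_antisymm (Finset.sup_le fun M hM => (Finset.mem_filter.1 hM).2.card_le) ?_
  have hgraph := isMatching_image_graph (s := Finset.univ) hf.injOn fun v _ => hF v
  have graph_injective : Function.Injective fun v => (v, f v) := fun _ _ h => congrArg Prod.fst h
  calc
    Fintype.card V = (Finset.univ.image fun v => (v, f v)).card :=
      (Finset.card_image_of_injective _ graph_injective).symm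
    _ ≤ matchNum F := Finset.le_sup (Finset.mem_filter.2 ⟨Finset.mem_univ _, hgraph⟩)

/-- The set of variables that an assignment makes false; it encodes assignments as sets of
vertices. -/
noncomputable def falseVars [Fintype V] (τ : V → Bool) : Finset V :=
  Finset.univ.filter fun v => τ v = false

lemma mem_falseVars [Fintype V] {τ : V → Bool} {v : V} : v ∈ falseVars τ ↔ τ v = false := by
  simp only [falseVars, Finset.mem_filter_univ]

lemma falseVars_surjective [Fintype V] : Function.Surjective (falseVars (V := V)) := fun T =>
  ⟨fun v => decide (v ∉ T), by ext v; simp [mem_falseVars]⟩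

end Formula

section Hypergraph

variable {U J : Type*}

/-- A hitting set of the hypergraph with edges `e j`: a set of vertices meeting every edge. -/
def IsHittingSet (e : J → Finset U) (S : Finset U) : Prop :=
  ∀ j, ∃ v ∈ S, v ∈ e j

/-- The edges disjoint from `T`, given as a set of indices so that parallel edges are counted
separately. -/
noncomputable def missedEdges [Fintype J] (e : J → Finset U) (T : Finset U) : Finset J :=
  Finset.univ.filter fun j => ¬ ∃ v ∈ T, v ∈ e j

lemma mem_missedEdges [Fintype J] {e : J → Finset U} {T : Finset U} {j : J} :
    j ∈ missedEdges e T ↔ ¬ ∃ v ∈ T, v ∈ e j := by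
  simp only [missedEdges, Finset.mem_filter_univ]

lemma IsHittingSet.missedEdges_eq_empty [Fintype J] {e : J → Finset U} {S : Finset U}
    (hS : IsHittingSet e S) : missedEdges e S = ∅ :=
  Finset.eq_empty_of_forall_notMem fun j hj => mem_missedEdges.1 hj (hS j)

lemma isHittingSet_union_image_missedEdges [Fintype J] {e : J → Finset U} {g : J → U}
    (hg : ∀ j, g j ∈ e j) (T : Finset U) : IsHittingSet e (T ∪ (missedEdges e T).image g) := by
  intro j
  by_cases hj : ∃ v ∈ T, v ∈ e j
  · obtain ⟨v, hvT, hvj⟩ := hj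
    exact ⟨v, Finset.mem_union_left _ hvT, hvj⟩
  · exact ⟨g j, Finset.mem_union_right _ (Finset.mem_image_of_mem g (mem_missedEdges.2 hj)), hg j⟩

lemma exists_isHittingSet_card_le [Fintype J] {e : J → Finset U} (he : ∀ j, (e j).Nonempty)
    (T : Finset U) :
    ∃ S, IsHittingSet e S ∧ S.card ≤ T.card + (missedEdges e T).card := by
  choose g hg using he
  exact ⟨_, isHittingSet_union_image_missedEdges hg T,
    (Finset.card_union_le _ _).trans (Nat.add_le_add_left Finset.card_image_le _)⟩

lemma exists_isHittingSet_card_add_le_iff [Fintype J] {e : J → Finset U}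
    (he : ∀ j, (e j).Nonempty) {k m : ℕ} :
    (∃ S, IsHittingSet e S ∧ S.card + k ≤ m) ↔
      ∃ T, T.card + (missedEdges e T).card + k ≤ m := by
  constructor
  · rintro ⟨S, hS, hSk⟩
    exact ⟨S, by rwa [hS.missedEdges_eq_empty, Finset.card_empty, add_zero]⟩
  · rintro ⟨T, hT⟩
    obtain ⟨S, hS, hST⟩ := exists_isHittingSet_card_le he T
    exact ⟨S, hS, (Nat.add_le_add_right hST k).trans hT⟩

end Hypergraph

section Reduction

variable {U J : Type*}

/-- The positive unit clauses of the reduction, one for each vertex. -/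
def vertexClauses (U : Type*) (x : U) : Finset (U × Bool) :=
  {(x, true)}

/-- The negative clauses of the reduction, one for each edge. -/
noncomputable def edgeClauses (e : J → Finset U) (j : J) : Finset (U × Bool) :=
  (e j).image fun v => (v, false)

/-- The formula `F` to which the hitting set problem for the hypergraph `e` is reduced. -/
noncomputable def hittingSetCNF (e : J → Finset U) : U ⊕ J → Finset (U × Bool) :=
  Sum.elim (vertexClauses U) (edgeClauses e)

lemma matchNum_hittingSetCNF [Fintype U] [Fintype J] (e : J → Finset U) :
    matchNum (hittingSetCNF e) = Fintype.card U :=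
  matchNum_eq_card_of_injective Sum.inl_injective fun _ => ⟨true, Finset.mem_singleton_self _⟩

lemma satCount_vertexClauses_add_card [Fintype U] (τ : U → Bool) :
    satCount (vertexClauses U) τ + (falseVars τ).card = Fintype.card U := by
  have falseVars_eq :
      falseVars τ = Finset.univ.filter fun x => ¬ Satisfies τ (vertexClauses U x) := by
    ext x
    rw [mem_falseVars, Finset.mem_filter_univ, vertexClauses, satisfies_singleton,
      Bool.not_eq_true]
  rw [falseVars_eq, satCount_add_card_not_satisfies]

lemma satCount_edgeClauses_add_card [Fintype U] [Fintype J] (e : J → Finset U) (τ : U → Bool) :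
    satCount (edgeClauses e) τ + (missedEdges e (falseVars τ)).card = Fintype.card J := by
  have missedEdges_eq : missedEdges e (falseVars τ) =
      Finset.univ.filter fun j => ¬ Satisfies τ (edgeClauses e j) := by
    ext j
    simp only [mem_missedEdges, Finset.mem_filter_univ, edgeClauses, satisfies_image_mk,
      mem_falseVars, and_comm]
  rw [missedEdges_eq, satCount_add_card_not_satisfies]

lemma satCount_hittingSetCNF_add_card [Fintype U] [Fintype J] (e : J → Finset U) (τ : U → Bool) :
    satCount (hittingSetCNF e) τ + ((falseVars τ).card + (missedEdges e (falseVars τ)).card) =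
      Fintype.card U + Fintype.card J := by
  rw [hittingSetCNF, satCount_sumElim, add_add_add_comm, satCount_vertexClauses_add_card,
    satCount_edgeClauses_add_card]

end Reduction

/-- The reduction from `(m-k)`-Hitting Set to `(ν(F)+k)`-SAT: for the formula `F` with a
unit positive clause per vertex and a purely negative clause per hyperedge, `ν(F) = n`,
and the hypergraph has a hitting set of size at most `|J| - k` iff `sat(F) ≥ n + k`. -/
theorem stmt16 {U J : Type*} [Fintype U] [Fintype J]
    (e : J → Finset U) (he : ∀ j, (e j).Nonempty)
    (F : U ⊕ J → Finset (U × Bool))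
    (hF1 : ∀ x : U, F (Sum.inl x) = {(x, true)})
    (hF2 : ∀ j : J, F (Sum.inr j) = (e j).image fun v => (v, false)) :
    matchNum F = Fintype.card U ∧
    ∀ k : ℕ,
      (∃ S : Finset U, (∀ j : J, ∃ v ∈ S, v ∈ e j) ∧ S.card + k ≤ Fintype.card J) ↔
      Fintype.card U + k ≤ satMax F := by
  obtain rfl : F = hittingSetCNF e := funext (Sum.rec hF1 hF2)
  refine ⟨matchNum_hittingSetCNF e, fun k => ?_⟩
  calc
    (∃ S, IsHittingSet e S ∧ S.card + k ≤ Fintype.card J) ↔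
        ∃ T, T.card + (missedEdges e T).card + k ≤ Fintype.card J :=
      exists_isHittingSet_card_add_le_iff he
    _ ↔ ∃ τ, (falseVars τ).card + (missedEdges e (falseVars τ)).card + k ≤ Fintype.card J :=
      falseVars_surjective.exists
    _ ↔ ∃ τ, Fintype.card U + k ≤ satCount (hittingSetCNF e) τ :=
      exists_congr fun τ => by
        have hcount := satCount_hittingSetCNF_add_card e τ
        omega
    _ ↔ Fintype.card U + k ≤ satMax (hittingSetCNF e) := le_satMax_iff.symm
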